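/- Let a > 0, let ν be a probability measure on ℝ^d whose support is contained in a ball of radius R, and let γ_d^a denote the centered Gaussian measure on ℝ^d with covariance a·Id_d. Then there exists a map φ : ℝ^d → ℝ^d which is Lipschitz with Lipschitz constant at most √a · e^{R²/(2a)} and which pushes forward the standard Gaussian measure γ_d to the convolution γ_d^a ⋆ ν. -/

import Mathlib

open MeasureTheory Real Set
open scoped ENNReal NNReal

noncomputable section

/-- `ℝ^d` as a Euclidean space. -/
abbrev Ed (d : ℕ) : Type := EuclideanSpace ℝ (Fin d)

/-- The standard Gaussian measure `γ_d` on `ℝ^d` (mean 0, identity covariance). -/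
def stdGaussian (d : ℕ) : Measure (Ed d) :=
  (volume : Measure (Ed d)).withDensity
    fun x => ENNReal.ofReal ((2 * π) ^ (-(d : ℝ) / 2) * Real.exp (-‖x‖ ^ 2 / 2))

/-- The centered Gaussian measure on `ℝ^d` with covariance `a·Id`. -/
def gaussianCov (d : ℕ) (a : ℝ) : Measure (Ed d) :=
  (volume : Measure (Ed d)).withDensity
    fun x => ENNReal.ofReal ((2 * π * a) ^ (-(d : ℝ) / 2) * Real.exp (-‖x‖ ^ 2 / (2 * a)))

/-- The Hessian quadratic form of `f` at `x`, evaluated at the direction `(w, w)`. -/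
def hessQF {d : ℕ} (f : Ed d → ℝ) (x w : Ed d) : ℝ :=
  fderiv ℝ (fun y => fderiv ℝ f y w) x w

/-- The (topological) support of a measure on `ℝ^d`. -/
def msupport {d : ℕ} (μ : Measure (Ed d)) : Set (Ed d) :=
  {x | ∀ U : Set (Ed d), IsOpen U → x ∈ U → μ U ≠ 0}

/-- The convolution `μ ⋆ ν` of two measures on `ℝ^d`: the law of `X + Y`
with `X ∼ μ`, `Y ∼ ν` independent. -/
def mconv {d : ℕ} (μ ν : Measure (Ed d)) : Measure (Ed d) :=
  Measure.map (fun p : Ed d × Ed d => p.1 + p.2) (μ.prod ν)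

/-- `μ` is `κ`-log-concave with density `p` w.r.t. Lebesgue measure: its support is
convex and `−∇² log p(x) ⪰ κ·Id` for `μ`-a.e. `x`. -/
def KLogConcaveD {d : ℕ} (κ : ℝ) (μ : Measure (Ed d)) (p : Ed d → ℝ) : Prop :=
  μ = (volume : Measure (Ed d)).withDensity (fun x => ENNReal.ofReal (p x)) ∧
    Convex ℝ (msupport μ) ∧
    ∀ᵐ x ∂μ, ∀ w : Ed d, hessQF (fun y => Real.log (p y)) x w ≤ -(κ * ‖w‖ ^ 2)

/-- `μ` is `κ`-log-concave. -/
def KLogConcave {d : ℕ} (κ : ℝ) (μ : Measure (Ed d)) : Prop :=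
  ∃ p : Ed d → ℝ, KLogConcaveD κ μ p

/-- `μ` is `β`-semi-log-convex with density `p` w.r.t. Lebesgue measure:
`−∇² log p(x) ⪯ β·Id` for every `x`. -/
def SemiLogConvexD {d : ℕ} (β : ℝ) (μ : Measure (Ed d)) (p : Ed d → ℝ) : Prop :=
  μ = (volume : Measure (Ed d)).withDensity (fun x => ENNReal.ofReal (p x)) ∧
    ∀ x w : Ed d, -(β * ‖w‖ ^ 2) ≤ hessQF (fun y => Real.log (p y)) x w

/-- `μ` is `β`-semi-log-convex. -/
def SemiLogConvex {d : ℕ} (β : ℝ) (μ : Measure (Ed d)) : Prop :=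
  ∃ p : Ed d → ℝ, SemiLogConvexD β μ p

/-- The Ornstein–Uhlenbeck semigroup:
`Q_t g(x) = ∫ g(e^{−t}x + √(1−e^{−2t})·y) dγ_d(y)`. -/
def OU {d : ℕ} (t : ℝ) (f : Ed d → ℝ) (x : Ed d) : ℝ :=
  ∫ y, f (Real.exp (-t) • x + Real.sqrt (1 - Real.exp (-2 * t)) • y) ∂(stdGaussian d)

/-- The heat semigroup: `P_t f(x) = ∫ f(x + √t·y) dγ_d(y)`. -/
def heatSG {d : ℕ} (t : ℝ) (f : Ed d → ℝ) (x : Ed d) : ℝ :=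
  ∫ y, f (x + Real.sqrt t • y) ∂(stdGaussian d)

/-- The entropy of `g` relative to `μ`:
`Ent_μ(g) = ∫ log(g)·g dμ − log(∫ g dμ)·∫ g dμ`. -/
def entRel {d : ℕ} (μ : Measure (Ed d)) (g : Ed d → ℝ) : ℝ :=
  ∫ x, Real.log (g x) * g x ∂μ - Real.log (∫ x, g x ∂μ) * ∫ x, g x ∂μ

/-- The variance of `g` under `μ`. -/
def varOf {d : ℕ} (μ : Measure (Ed d)) (g : Ed d → ℝ) : ℝ :=
  ∫ x, g x ^ 2 ∂μ - (∫ x, g x ∂μ) ^ 2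

/-- The distribution function of a density `p`: `F(λ) = Vol({x : p(x) ≥ λ})`. -/
def distFun {d : ℕ} (p : Ed d → ℝ) (l : ℝ) : ℝ≥0∞ :=
  (volume : Measure (Ed d)) {x | l ≤ p x}

/-- The density of the standard Gaussian measure w.r.t. Lebesgue measure. -/
def gaussPdf (d : ℕ) (x : Ed d) : ℝ :=
  (2 * π) ^ (-(d : ℝ) / 2) * Real.exp (-‖x‖ ^ 2 / 2)

/-- The `q`-Rényi entropy of a density `p`: `h_q = log(∫ p^q)/(1−q)`. -/
def renyi {d : ℕ} (p : Ed d → ℝ) (q : ℝ) : ℝ :=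
  Real.log (∫ x, p x ^ q ∂(volume : Measure (Ed d))) / (1 - q)

/-!
Let `X` be a centred Gaussian vector with covariance `a • 1`, let `Y` be independent of `X` with law
`ν`, and set `X_t = X + t • Y`. The laws of `X_t` are transported by the flow of the velocity field
`v t x = E[Y | X_t = x]`. By Bayes' formula `v t x` is the mean of `ν` tilted by
`y ↦ exp (-‖x - t • y‖ ^ 2 / (2 * a))`, so its derivative in `x` is `t / a` times the covariance of
a random vector of norm at most `R`, and `v t` is Lipschitz with constant `t * R ^ 2 / a`. Hence the
flow from time `0` to time `1` is Lipschitz with constant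
`exp (∫ t in 0..1, t * R ^ 2 / a) = exp (R ^ 2 / (2 * a))`.

Instead of solving the differential equation, the flow is replaced by its Euler scheme with step
`1 / n`, which has the same Lipschitz bound and, by a second-order Taylor expansion, transports the
laws up to an error `O(1 / n)` against test functions of class `C^{1,1}`. The maps of the scheme
have a limit point by the Arzelà-Ascoli theorem, and `x ↦ √a • x` transports the standard Gaussian
measure to the law of `X_0`.
-/

section C11

variable {E F G : Type*} [NormedAddCommGroup E] [NormedSpace ℝ E] [NormedAddCommGroup F]
  [NormedSpace ℝ F] [NormedAddCommGroup G] [NormedSpace ℝ G]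

/-- The functions of class `C^{1,1}`, with explicit constants: `u` is differentiable and
`K`-Lipschitz, and its derivative is `M`-Lipschitz. -/
structure IsC11With (K M : ℝ≥0) (u : E → F) : Prop where
  differentiable : Differentiable ℝ u
  lipschitzWith : LipschitzWith K u
  lipschitzWith_fderiv : LipschitzWith M (fderiv ℝ u)

namespace IsC11With

variable {K M A B : ℝ≥0} {u : E → F} {g : F → G}

lemma norm_fderiv_le (hu : IsC11With K M u) (x : E) : ‖fderiv ℝ u x‖ ≤ K :=
  norm_fderiv_le_of_lipschitz ℝ hu.lipschitzWith

lemma mono (hu : IsC11With K M u) (hK : K ≤ A) (hM : M ≤ B) : IsC11With A B u :=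
  ⟨hu.differentiable, hu.lipschitzWith.weaken hK, hu.lipschitzWith_fderiv.weaken hM⟩

lemma comp (hg : IsC11With K M g) (hu : IsC11With A B u) :
    IsC11With (K * A) (M * A ^ 2 + K * B) (g ∘ u) := by
  refine ⟨hg.differentiable.comp hu.differentiable, hg.lipschitzWith.comp hu.lipschitzWith,
    .of_dist_le_mul fun x y ↦ ?_⟩
  set Dg := fun z ↦ fderiv ℝ g (u z)
  set Du := fderiv ℝ u
  have chain (z : E) : fderiv ℝ (g ∘ u) z = (Dg z).comp (Du z) :=
    fderiv_comp z (hg.differentiable _) (hu.differentiable _)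
  have hDg : ‖Dg x - Dg y‖ ≤ M * (A * ‖x - y‖) := by
    simpa only [dist_eq_norm, NNReal.coe_mul, mul_assoc, Function.comp_apply] using
      (hg.lipschitzWith_fderiv.comp hu.lipschitzWith).dist_le_mul x y
  have hDu : ‖Du x - Du y‖ ≤ B * ‖x - y‖ := hu.lipschitzWith_fderiv.norm_sub_le x y
  rw [dist_eq_norm, dist_eq_norm, chain, chain]
  calc ‖(Dg x).comp (Du x) - (Dg y).comp (Du y)‖
      = ‖(Dg x - Dg y).comp (Du x) + (Dg y).comp (Du x - Du y)‖ := by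
        congr 1; ext; simp
    _ ≤ ‖Dg x - Dg y‖ * ‖Du x‖ + ‖Dg y‖ * ‖Du x - Du y‖ :=
        (norm_add_le _ _).trans
          (add_le_add (ContinuousLinearMap.opNorm_comp_le _ _)
            (ContinuousLinearMap.opNorm_comp_le _ _))
    _ ≤ M * (A * ‖x - y‖) * A + K * (B * ‖x - y‖) := by
        gcongr
        · exact hu.norm_fderiv_le x
        · exact hg.norm_fderiv_le (u y)
    _ = ↑(M * A ^ 2 + K * B) * ‖x - y‖ := by push_cast; ring

lemma of_continuousLinearMap (f : E →L[ℝ] F) : IsC11With ‖f‖₊ 0 f := by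
  refine ⟨f.differentiable, f.lipschitz, ?_⟩
  simpa only [show fderiv ℝ f = fun _ ↦ f from funext fun _ ↦ f.fderiv] using
    LipschitzWith.const f

lemma id_add_smul {v : E → E} (hv : IsC11With A B v) (h : ℝ≥0) :
    IsC11With (1 + h * A) (h * B) fun x ↦ x + h • v x := by
  have hderiv (x : E) :
      HasFDerivAt (fun x ↦ x + h • v x) (ContinuousLinearMap.id ℝ E + h • fderiv ℝ v x) x :=
    (hasFDerivAt_id x).add ((hv.differentiable x).hasFDerivAt.const_smul h)
  refine ⟨fun x ↦ (hderiv x).differentiableAt, LipschitzWith.id.add ?_, ?_⟩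
  · simpa [NNReal.smul_def, Function.comp_def] using
      (lipschitzWith_smul (h : ℝ)).comp hv.lipschitzWith
  · rw [funext fun x ↦ (hderiv x).fderiv]
    simpa [NNReal.smul_def] using (LipschitzWith.const (ContinuousLinearMap.id ℝ E)).add
      ((lipschitzWith_smul (h : ℝ)).comp hv.lipschitzWith_fderiv)

lemma comp_id_add_smul {L h : ℝ≥0} (hu : IsC11With L L u) {v : E → E} (hv : IsC11With A B v)
    (hh : h ≤ 1) :
    IsC11With (L * (1 + h * (2 * A + A ^ 2 + B))) (L * (1 + h * (2 * A + A ^ 2 + B)))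
      fun x ↦ u (x + h • v x) := by
  refine (hu.comp (hv.id_add_smul h)).mono ?_ ?_
  · gcongr
    calc A ≤ A + (A + A ^ 2 + B) := le_self_add
      _ = 2 * A + A ^ 2 + B := by ring
  · calc L * (1 + h * A) ^ 2 + L * (h * B)
        = L * (1 + h * (2 * A + h * A ^ 2 + B)) := by ring
      _ ≤ L * (1 + h * (2 * A + 1 * A ^ 2 + B)) := by gcongr
      _ = L * (1 + h * (2 * A + A ^ 2 + B)) := by rw [one_mul]

lemma norm_sub_sub_fderiv_le (hu : IsC11With K M u) (x p : E) :
    ‖u (x + p) - u x - fderiv ℝ u x p‖ ≤ M * ‖p‖ ^ 2 := by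
  have hseg (z : E) (hz : z ∈ segment ℝ x (x + p)) :
      ‖fderiv ℝ u z - fderiv ℝ u x‖ ≤ M * ‖p‖ :=
    (hu.lipschitzWith_fderiv.norm_sub_le z x).trans
      (by gcongr; simpa using norm_sub_le_of_mem_segment hz)
  have := (convex_segment x (x + p)).norm_image_sub_le_of_norm_fderiv_le' (𝕜 := ℝ)
    (fun z _ ↦ hu.differentiable z) hseg (left_mem_segment ℝ _ _) (right_mem_segment ℝ _ _)
  simpa [sq, mul_assoc] using this

lemma norm_sub_sub_smul_fderiv_le (hu : IsC11With K M u) {R : ℝ} {p q : E} (hp : ‖p‖ ≤ R)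
    (hq : ‖q‖ ≤ R) (x : E) (h : ℝ≥0) :
    ‖u (x + h • p) - u (x + h • q) - (h : ℝ) • fderiv ℝ u x (p - q)‖ ≤
      2 * R ^ 2 * M * h ^ 2 := by
  set r : E → F := fun p ↦ u (x + h • p) - u x - fderiv ℝ u x (h • p)
  have hr {p : E} (hp : ‖p‖ ≤ R) : ‖r p‖ ≤ R ^ 2 * M * h ^ 2 :=
    calc ‖r p‖ ≤ M * ‖h • p‖ ^ 2 := hu.norm_sub_sub_fderiv_le x _
      _ = ‖p‖ ^ 2 * M * h ^ 2 := by
        rw [NNReal.smul_def, norm_smul, NNReal.norm_eq]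
        ring
      _ ≤ R ^ 2 * M * h ^ 2 := by gcongr
  calc ‖u (x + h • p) - u (x + h • q) - (h : ℝ) • fderiv ℝ u x (p - q)‖ = ‖r p - r q‖ := by
        simp only [r, NNReal.smul_def, map_smul, map_sub, smul_sub]
        congr 1
        abel
    _ ≤ R ^ 2 * M * h ^ 2 + R ^ 2 * M * h ^ 2 :=
        (norm_sub_le _ _).trans (add_le_add (hr hp) (hr hq))
    _ = 2 * R ^ 2 * M * h ^ 2 := by ring

end IsC11With

lemma isC11With_cexp_ofReal_mul_I : IsC11With 1 1 fun r : ℝ ↦ Complex.exp (r * Complex.I) := by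
  set f : ℝ → ℂ := fun r ↦ Complex.exp (r * Complex.I)
  have hderiv (r : ℝ) : HasDerivAt f (f r * Complex.I) r := by
    simpa using ((hasDerivAt_id (r : ℂ)).comp_ofReal.mul_const Complex.I).cexp
  have hdiff : Differentiable ℝ f := fun r ↦ (hderiv r).differentiableAt
  have hlip : LipschitzWith 1 f := lipschitzWith_of_nnnorm_deriv_le hdiff fun r ↦ by
    rw [(hderiv r).deriv, ← NNReal.coe_le_coe, coe_nnnorm]
    simp [f, Complex.norm_exp_ofReal_mul_I]
  refine ⟨hdiff, hlip, .of_dist_le_mul fun r s ↦ ?_⟩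
  have hsub : fderiv ℝ f r - fderiv ℝ f s =
      ContinuousLinearMap.toSpanSingleton ℝ ((f r - f s) * Complex.I) := by
    rw [(hderiv r).hasFDerivAt.fderiv, (hderiv s).hasFDerivAt.fderiv]
    ext
    simp [sub_mul]
  calc dist (fderiv ℝ f r) (fderiv ℝ f s) = dist (f r) (f s) := by
        simp [dist_eq_norm, hsub]
    _ ≤ (1 : ℝ≥0) * dist r s := hlip.dist_le_mul r s

lemma isC11With_cexp_inner_mul_I {H : Type*} [NormedAddCommGroup H] [InnerProductSpace ℝ H]
    (ξ : H) :
    IsC11With ‖ξ‖₊ (‖ξ‖₊ ^ 2) fun x : H ↦ Complex.exp (inner ℝ x ξ * Complex.I) := by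
  have hinner : IsC11With ‖ξ‖₊ 0 fun x : H ↦ inner ℝ x ξ := by
    have hnorm : ‖innerSL ℝ ξ‖₊ = ‖ξ‖₊ := NNReal.eq (innerSL_apply_norm ℝ ξ)
    simpa [hnorm, real_inner_comm] using IsC11With.of_continuousLinearMap (innerSL ℝ ξ)
  simpa [Function.comp_def] using isC11With_cexp_ofReal_mul_I.comp hinner

end C11

section Euler

open Filter Topology

variable {E : Type*} [NormedAddCommGroup E] [NormedSpace ℝ E]

/-- The explicit Euler scheme with step `h` for the equation `x' = v t x` started at time `0`:
`eulerMap v h k` sends the initial position to the position after `k` steps. -/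
def eulerMap (v : ℝ≥0 → E → E) (h : ℝ≥0) : ℕ → E → E
  | 0 => id
  | k + 1 => fun x ↦ eulerMap v h k x + h • v (k * h) (eulerMap v h k x)

variable {v : ℝ≥0 → E → E}

-- The exponents add up like a left Riemann sum of `∫ c t dt`.
lemma lipschitzWith_eulerMap {c : ℝ≥0} (hv : ∀ t, LipschitzWith (c * t) (v t)) (h : ℝ≥0) (k : ℕ) :
    LipschitzWith (Real.exp (c * (k * h) ^ 2 / 2)).toNNReal (eulerMap v h k) := by
  induction k with
  | zero => simpa [eulerMap] using LipschitzWith.id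
  | succ k ih =>
    have hstep : LipschitzWith (1 + h * (c * (k * h))) fun x ↦ x + h • v (k * h) x :=
      LipschitzWith.id.add <| by
        simpa [NNReal.smul_def, Function.comp_def] using
          (lipschitzWith_smul (h : ℝ)).comp (hv (k * h))
    refine (hstep.comp ih).weaken (NNReal.coe_le_coe.1 ?_)
    rw [NNReal.coe_mul, Real.coe_toNNReal _ (exp_nonneg _), Real.coe_toNNReal _ (exp_nonneg _)]
    push_cast
    calc (1 + h * (c * (k * h))) * Real.exp (c * (k * h) ^ 2 / 2)
        ≤ Real.exp (h * (c * (k * h))) * Real.exp (c * (k * h) ^ 2 / 2) := by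
          gcongr
          rw [add_comm]
          exact Real.add_one_le_exp _
      _ = Real.exp (c * ((k * h) ^ 2 + 2 * (k * h) * h) / 2) := by
          rw [← Real.exp_add]
          ring_nf
      _ ≤ Real.exp (c * ((k + 1) * h) ^ 2 / 2) := by
          gcongr
          linarith [sq_nonneg (h : ℝ)]

lemma norm_eulerMap_le {R : ℝ} (hv : ∀ t x, ‖v t x‖ ≤ R) (h : ℝ≥0) (k : ℕ) (x : E) :
    ‖eulerMap v h k x‖ ≤ ‖x‖ + k * h * R := by
  induction k with
  | zero => simp [eulerMap]
  | succ k ih =>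
    calc ‖eulerMap v h k x + h • v (k * h) (eulerMap v h k x)‖
        ≤ ‖eulerMap v h k x‖ + h * ‖v (k * h) (eulerMap v h k x)‖ :=
          (norm_add_le _ _).trans_eq (by rw [NNReal.smul_def, norm_smul, NNReal.norm_eq])
      _ ≤ ‖x‖ + k * h * R + h * R := by gcongr; exact hv _ _
      _ = ‖x‖ + ↑(k + 1) * h * R := by push_cast; ring

variable [MeasurableSpace E]

/-- The velocity field `v` transports the family of measures `μ`, infinitesimally and in the weak
sense: moving `μ t` by one Euler step of length `h` differs from `μ (t + h)` by `O(h ^ 2)` when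
tested against bounded functions of class `C^{1,1}`. -/
def IsWeaklyConsistent (v : ℝ≥0 → E → E) (μ : ℝ≥0 → Measure E) (C : ℝ≥0) : Prop :=
  ∀ (t h K M : ℝ≥0) (u : E → ℂ), IsC11With K M u → (∀ x, ‖u x‖ ≤ 1) →
    ‖∫ x, u x ∂μ (t + h) - ∫ x, u (x + h • v t x) ∂μ t‖ ≤ C * M * h ^ 2

namespace IsWeaklyConsistent

variable {μ : ℝ≥0 → Measure E} {A B C L : ℝ≥0} {u : E → ℂ}

-- The value function `u` is pulled back through the scheme one step at a time, so that each step
-- costs one truncation error, with a constant that grows by the factor `1 + O(h)`.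
lemma norm_integral_sub_integral_eulerMap_le (hμ : IsWeaklyConsistent v μ C)
    (hv : ∀ t ≤ 1, IsC11With A B (v t)) {h : ℝ≥0} (hh : h ≤ 1) (k : ℕ) (hk : k * h ≤ 1)
    (hu : IsC11With L L u) (hu1 : ∀ x, ‖u x‖ ≤ 1) :
    ‖∫ x, u x ∂μ (k * h) - ∫ x, u (eulerMap v h k x) ∂μ 0‖ ≤
      k * (C * (L * (1 + h * (2 * A + A ^ 2 + B)) ^ k) * h ^ 2) := by
  induction k generalizing L u with
  | zero => simp [eulerMap]
  | succ k ih =>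
    have hk' : k * h ≤ 1 := le_trans (by gcongr; simp) hk
    set q : ℝ≥0 := 1 + h * (2 * A + A ^ 2 + B)
    set u' : E → ℂ := fun x ↦ u (x + h • v (k * h) x)
    have hu' : IsC11With (L * q) (L * q) u' := hu.comp_id_add_smul (hv _ hk') hh
    have htail := ih hk' hu' fun _ ↦ hu1 _
    have hstep : ‖∫ x, u x ∂μ (↑(k + 1) * h) - ∫ x, u' x ∂μ (k * h)‖ ≤
        C * (L * q ^ (k + 1)) * h ^ 2 := by
      have hq : (1 : ℝ) ≤ q ^ (k + 1) := one_le_pow₀ (mod_cast (le_self_add : 1 ≤ q))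
      have : ↑(k + 1) * h = k * h + h := by push_cast; ring
      rw [this]
      refine (hμ _ _ _ _ _ hu hu1).trans ?_
      gcongr
      exact le_mul_of_one_le_right L.2 hq
    calc ‖∫ x, u x ∂μ (↑(k + 1) * h) - ∫ x, u' (eulerMap v h k x) ∂μ 0‖
        ≤ C * (L * q ^ (k + 1)) * h ^ 2 + k * (C * (↑(L * q) * q ^ k) * h ^ 2) :=
          (norm_sub_le_norm_sub_add_norm_sub _ _ _).trans (add_le_add hstep htail)
      _ = ↑(k + 1) * (C * (L * q ^ (k + 1)) * h ^ 2) := by push_cast; ring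

lemma tendsto_integral_eulerMap (hμ : IsWeaklyConsistent v μ C)
    (hv : ∀ t ≤ 1, IsC11With A B (v t)) (hu : IsC11With L L u) (hu1 : ∀ x, ‖u x‖ ≤ 1) :
    Tendsto (fun n : ℕ ↦ ∫ x, u (eulerMap v (n : ℝ≥0)⁻¹ n x) ∂μ 0) atTop (𝓝 (∫ x, u x ∂μ 1)) := by
  set q : ℝ≥0 := 2 * A + A ^ 2 + B
  have herr (n : ℕ) (hn : 0 < n) :
      ‖∫ x, u (eulerMap v (n : ℝ≥0)⁻¹ n x) ∂μ 0 - ∫ x, u x ∂μ 1‖ ≤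
        C * (L * Real.exp q) * (n : ℝ)⁻¹ := by
    have hn0 : (n : ℝ≥0) ≠ 0 := by positivity
    have hone : (n : ℝ≥0) * (n : ℝ≥0)⁻¹ = 1 := mul_inv_cancel₀ hn0
    have hpow : (1 + (n : ℝ)⁻¹ * q) ^ n ≤ Real.exp q := by
      have hqn : -(q : ℝ) ≤ n := (neg_nonpos.2 q.2).trans n.cast_nonneg
      simpa [div_eq_inv_mul] using Real.one_sub_div_pow_le_exp_neg hqn
    have := hμ.norm_integral_sub_integral_eulerMap_le hv (Nat.cast_inv_le_one n) n hone.le hu hu1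
    rw [hone, norm_sub_rev] at this
    calc _ ≤ _ := this
      _ ≤ n * (C * (L * Real.exp q) * (n : ℝ)⁻¹ ^ 2) := by
          push_cast
          gcongr
          exact_mod_cast hpow
      _ = C * (L * Real.exp q) * (n : ℝ)⁻¹ := by field_simp
  refine tendsto_iff_norm_sub_tendsto_zero.2
    (squeeze_zero' (.of_forall fun _ ↦ norm_nonneg _) ((eventually_gt_atTop 0).mono herr) ?_)
  simpa using (tendsto_inv_atTop_nhds_zero_nat (𝕜 := ℝ)).const_mul (C * (L * Real.exp q) : ℝ)

end IsWeaklyConsistent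

end Euler

section Tilt

open Filter Topology InnerProductSpace ProbabilityTheory

variable {Ω E G : Type*} [MeasurableSpace Ω] [NormedAddCommGroup E] [InnerProductSpace ℝ E]
  [NormedAddCommGroup G] [NormedSpace ℝ G] {μ : Measure Ω} {Y : Ω → E} {F : Ω → G} {R B : ℝ≥0}

/-- The covariance operator `E[F ⊗ Y] - E[F] ⊗ E[Y]` of a random vector `F` of a normed space and
a random vector `Y` of an inner product space, as an operator from the latter to the former. -/
def crossCov (μ : Measure Ω) (F : Ω → G) (Y : Ω → E) : E →L[ℝ] G :=
  ∫ ω, rankOne ℝ (F ω) (Y ω) ∂μ - rankOne ℝ (∫ ω, F ω ∂μ) (∫ ω, Y ω ∂μ)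

lemma aestronglyMeasurable_rankOne (hF : AEStronglyMeasurable F μ)
    (hY : AEStronglyMeasurable Y μ) : AEStronglyMeasurable (fun ω ↦ rankOne ℝ (F ω) (Y ω)) μ :=
  (ContinuousLinearMap.smulRightL ℝ E G).continuous₂.comp_aestronglyMeasurable
    (((innerSL ℝ).continuous.comp_aestronglyMeasurable hY).prodMk hF)

lemma norm_rankOne_le (hFB : ∀ᵐ ω ∂μ, ‖F ω‖ ≤ B) (hYR : ∀ᵐ ω ∂μ, ‖Y ω‖ ≤ R) :
    ∀ᵐ ω ∂μ, ‖rankOne ℝ (F ω) (Y ω)‖ ≤ (B * R : ℝ≥0) := by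
  filter_upwards [hFB, hYR] with ω hF hY
  rw [norm_rankOne, NNReal.coe_mul]
  gcongr

lemma integrable_exp_inner [IsFiniteMeasure μ] (hY : AEStronglyMeasurable Y μ)
    (hYR : ∀ᵐ ω ∂μ, ‖Y ω‖ ≤ R) (x : E) : Integrable (fun ω ↦ Real.exp (inner ℝ x (Y ω))) μ := by
  refine .of_bound (Real.continuous_exp.comp_aestronglyMeasurable (hY.const_inner))
    (Real.exp (‖x‖ * R)) ?_
  filter_upwards [hYR] with ω hω
  rw [Real.norm_eq_abs, Real.abs_exp]
  gcongr
  exact (real_inner_le_norm _ _).trans (by gcongr)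

lemma integral_abs_sub_integral_le [IsProbabilityMeasure μ] {X : Ω → ℝ} {c : ℝ} (hc : 0 ≤ c)
    (hX : AEStronglyMeasurable X μ) (hXc : ∀ᵐ ω ∂μ, |X ω| ≤ c) :
    ∫ ω, |X ω - ∫ ω', X ω' ∂μ| ∂μ ≤ c := by
  set Z : Ω → ℝ := fun ω ↦ |X ω - ∫ ω', X ω' ∂μ|
  have hX2 : MemLp X 2 μ := .of_bound hX c hXc
  have hZ2 : MemLp Z 2 μ := (hX2.sub (memLp_const _)).abs
  refine abs_le_of_sq_le_sq' ?_ hc |>.2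
  calc (∫ ω, Z ω ∂μ) ^ 2 ≤ ∫ ω, Z ω ^ 2 ∂μ := by
        have := (variance_eq_sub hZ2).symm.trans_ge (variance_nonneg Z μ)
        simpa using this
    _ = variance X μ := by
        rw [variance_eq_integral hX.aemeasurable]
        simp [Z]
    _ ≤ ∫ ω, X ω ^ 2 ∂μ := variance_le_expectation_sq hX
    _ ≤ ∫ _, c ^ 2 ∂μ := by
        refine integral_mono_ae hX2.integrable_sq (integrable_const _) ?_
        filter_upwards [hXc] with ω hω
        exact sq_le_sq' (abs_le.1 hω).1 (abs_le.1 hω).2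
    _ = c ^ 2 := by simp

lemma hasFDerivAt_integral_exp_inner_smul [IsFiniteMeasure μ] (hF : AEStronglyMeasurable F μ)
    (hFB : ∀ᵐ ω ∂μ, ‖F ω‖ ≤ B) (hY : AEStronglyMeasurable Y μ) (hYR : ∀ᵐ ω ∂μ, ‖Y ω‖ ≤ R) (x : E) :
    HasFDerivAt (fun x ↦ ∫ ω, Real.exp (inner ℝ x (Y ω)) • F ω ∂μ)
      (∫ ω, Real.exp (inner ℝ x (Y ω)) • rankOne ℝ (F ω) (Y ω) ∂μ) x := by
  have hexp (x : E) := integrable_exp_inner hY hYR x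
  refine hasFDerivAt_integral_of_dominated_of_fderiv_le
    (F' := fun x ω ↦ Real.exp (inner ℝ x (Y ω)) • rankOne ℝ (F ω) (Y ω))
    (bound := fun _ ↦ Real.exp ((‖x‖ + 1) * R) * (B * R : ℝ≥0)) (Metric.ball_mem_nhds x one_pos)
    (.of_forall fun x ↦ (hexp x).aestronglyMeasurable.smul hF) ((hexp x).smul_bdd B hF hFB)
    ((hexp x).aestronglyMeasurable.smul (aestronglyMeasurable_rankOne hF hY)) ?_
    (integrable_const _) (.of_forall fun ω z _ ↦ ?_)
  · filter_upwards [hYR, norm_rankOne_le hFB hYR] with ω hω hFY z hz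
    have hz' : ‖z‖ ≤ ‖x‖ + 1 := (norm_lt_of_mem_ball hz).le
    rw [norm_smul, Real.norm_eq_abs, Real.abs_exp]
    gcongr
    exact (real_inner_le_norm _ _).trans (by gcongr)
  · have hinner : HasFDerivAt (fun z ↦ inner ℝ z (Y ω)) (innerSL ℝ (Y ω)) z := by
      simpa [real_inner_comm] using (innerSL ℝ (Y ω)).hasFDerivAt (x := z)
    refine (hinner.exp.smul_const (F ω)).congr_fderiv ?_
    ext p
    simp [mul_smul]

variable [CompleteSpace E]

lemma norm_crossCov_le [IsProbabilityMeasure μ] (hF : AEStronglyMeasurable F μ)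
    (hFB : ∀ᵐ ω ∂μ, ‖F ω‖ ≤ B) (hY : AEStronglyMeasurable Y μ) (hYR : ∀ᵐ ω ∂μ, ‖Y ω‖ ≤ R) :
    ‖crossCov μ F Y‖ ≤ B * R := by
  have iF : Integrable F μ := .of_bound hF B hFB
  have iY : Integrable Y μ := .of_bound hY R hYR
  have iFY := Integrable.of_bound (aestronglyMeasurable_rankOne hF hY) _ (norm_rankOne_le hFB hYR)
  refine ContinuousLinearMap.opNorm_le_bound _ (by positivity) fun p ↦ ?_
  set X : Ω → ℝ := fun ω ↦ inner ℝ (Y ω) p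
  have hX : AEStronglyMeasurable X μ := hY.inner_const
  have hXR : ∀ᵐ ω ∂μ, |X ω| ≤ R * ‖p‖ := by
    filter_upwards [hYR] with ω hω
    exact (abs_real_inner_le_norm _ _).trans (by gcongr)
  have iX : Integrable X μ := .of_bound hX _ hXR
  have hmean : inner ℝ (∫ ω, Y ω ∂μ) p = ∫ ω, X ω ∂μ := by
    simp only [X, real_inner_comm, integral_inner iY]
  have centred : crossCov μ F Y p = ∫ ω, (X ω - ∫ ω', X ω' ∂μ) • F ω ∂μ := by
    rw [crossCov, sub_apply, ContinuousLinearMap.integral_apply iFY]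
    simp only [rankOne_apply, hmean, sub_smul]
    rw [← integral_smul]
    exact (integral_sub (iF.bdd_smul _ hX hXR) (iF.smul (∫ ω, X ω ∂μ))).symm
  have iXc : Integrable (fun ω ↦ |X ω - ∫ ω', X ω' ∂μ|) μ := (iX.sub (integrable_const _)).abs
  calc ‖crossCov μ F Y p‖ ≤ ∫ ω, B * |X ω - ∫ ω', X ω' ∂μ| ∂μ := by
        rw [centred]
        refine norm_integral_le_of_norm_le (iXc.const_mul _) ?_
        filter_upwards [hFB] with ω hω
        rw [norm_smul, mul_comm, Real.norm_eq_abs]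
        gcongr
    _ ≤ B * (R * ‖p‖) := by
        rw [integral_const_mul]
        gcongr
        exact integral_abs_sub_integral_le (by positivity) hX hXR
    _ = B * R * ‖p‖ := (mul_assoc _ _ _).symm

lemma hasFDerivAt_integral_tilted_inner_zero [IsProbabilityMeasure μ]
    (hF : AEStronglyMeasurable F μ) (hFB : ∀ᵐ ω ∂μ, ‖F ω‖ ≤ B) (hY : AEStronglyMeasurable Y μ)
    (hYR : ∀ᵐ ω ∂μ, ‖Y ω‖ ≤ R) :
    HasFDerivAt (fun x ↦ ∫ ω, F ω ∂(μ.tilted fun ω ↦ inner ℝ x (Y ω))) (crossCov μ F Y) 0 := by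
  set Z : E → ℝ := fun x ↦ ∫ ω, Real.exp (inner ℝ x (Y ω)) ∂μ
  have iY : Integrable Y μ := .of_bound hY R hYR
  have hN := hasFDerivAt_integral_exp_inner_smul hF hFB hY hYR 0
  have hZ : HasFDerivAt Z (innerSL ℝ (∫ ω, Y ω ∂μ)) 0 := by
    have := hasFDerivAt_integral_exp_inner_smul (F := fun _ ↦ (1 : ℝ)) (B := 1)
      aestronglyMeasurable_const (by simp) hY hYR 0
    simp only [smul_eq_mul, mul_one, inner_zero_left, Real.exp_zero, one_smul,
      rankOne_one_left_eq_innerSL] at this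
    rwa [(innerSL ℝ).integral_comp_comm iY] at this
  have hZ0 : Z 0 = 1 := by simp [Z]
  have hZinv := (hasDerivAt_inv (hZ0 ▸ one_ne_zero)).comp_hasFDerivAt 0 hZ
  have hquot (x : E) : ∫ ω, F ω ∂(μ.tilted fun ω ↦ inner ℝ x (Y ω)) =
      (Z x)⁻¹ • ∫ ω, Real.exp (inner ℝ x (Y ω)) • F ω ∂μ := by
    rw [integral_tilted, ← integral_smul]
    simp only [smul_smul, div_eq_inv_mul, Z]
  rw [funext hquot]
  refine (hZinv.smul hN).congr_fderiv ?_
  ext p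
  simp [crossCov, hZ0, sub_eq_add_neg]

lemma hasFDerivAt_integral_tilted_inner [IsProbabilityMeasure μ]
    (hF : AEStronglyMeasurable F μ) (hFB : ∀ᵐ ω ∂μ, ‖F ω‖ ≤ B) (hY : AEStronglyMeasurable Y μ)
    (hYR : ∀ᵐ ω ∂μ, ‖Y ω‖ ≤ R) (x : E) :
    HasFDerivAt (fun x ↦ ∫ ω, F ω ∂(μ.tilted fun ω ↦ inner ℝ x (Y ω)))
      (crossCov (μ.tilted fun ω ↦ inner ℝ x (Y ω)) F Y) x := by
  set ρ := μ.tilted fun ω ↦ inner ℝ x (Y ω)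
  have hρμ : ρ ≪ μ := tilted_absolutelyContinuous μ _
  have iexp := integrable_exp_inner hY hYR x
  have : IsProbabilityMeasure ρ := isProbabilityMeasure_tilted iexp
  have htilt (z : E) : μ.tilted (fun ω ↦ inner ℝ z (Y ω)) =
      ρ.tilted fun ω ↦ inner ℝ (z - x) (Y ω) := by
    rw [tilted_tilted iexp]
    congr with ω
    simp [inner_sub_left]
  simp only [htilt]
  refine (hasFDerivAt_comp_sub (f := fun z ↦ ∫ ω, F ω ∂(ρ.tilted fun ω ↦ inner ℝ z (Y ω))) x).2 ?_
  rw [sub_self]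
  exact hasFDerivAt_integral_tilted_inner_zero (hF.mono_ac hρμ) (hρμ.ae_le hFB)
    (hY.mono_ac hρμ) (hρμ.ae_le hYR)

lemma lipschitzWith_integral_tilted_inner [IsProbabilityMeasure μ]
    (hF : AEStronglyMeasurable F μ) (hFB : ∀ᵐ ω ∂μ, ‖F ω‖ ≤ B) (hY : AEStronglyMeasurable Y μ)
    (hYR : ∀ᵐ ω ∂μ, ‖Y ω‖ ≤ R) :
    LipschitzWith (B * R) fun x ↦ ∫ ω, F ω ∂(μ.tilted fun ω ↦ inner ℝ x (Y ω)) := by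
  have hderiv := hasFDerivAt_integral_tilted_inner hF hFB hY hYR
  refine lipschitzWith_of_nnnorm_fderiv_le (𝕜 := ℝ) (fun x ↦ (hderiv x).differentiableAt) fun x ↦ ?_
  have hρμ := tilted_absolutelyContinuous μ fun ω ↦ inner ℝ x (Y ω)
  have := isProbabilityMeasure_tilted (integrable_exp_inner hY hYR x)
  rw [(hderiv x).fderiv]
  exact norm_crossCov_le (hF.mono_ac hρμ) (hρμ.ae_le hFB) (hY.mono_ac hρμ) (hρμ.ae_le hYR)

lemma isC11With_integral_tilted_inner [IsProbabilityMeasure μ] (hY : AEStronglyMeasurable Y μ)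
    (hYR : ∀ᵐ ω ∂μ, ‖Y ω‖ ≤ R) :
    IsC11With (R * R) (3 * R ^ 3) fun x ↦ ∫ ω, Y ω ∂(μ.tilted fun ω ↦ inner ℝ x (Y ω)) := by
  have hderiv := hasFDerivAt_integral_tilted_inner hY hYR hY hYR
  have hlip := lipschitzWith_integral_tilted_inner hY hYR hY hYR
  refine ⟨fun x ↦ (hderiv x).differentiableAt, hlip, .of_dist_le_mul fun x y ↦ ?_⟩
  set m : E → E := fun x ↦ ∫ ω, Y ω ∂(μ.tilted fun ω ↦ inner ℝ x (Y ω))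
  set S : E → E →L[ℝ] E :=
    fun x ↦ ∫ ω, rankOne ℝ (Y ω) (Y ω) ∂(μ.tilted fun ω ↦ inner ℝ x (Y ω))
  have hm (x : E) : ‖m x‖ ≤ R := by
    have := isProbabilityMeasure_tilted (integrable_exp_inner hY hYR x)
    simpa using norm_integral_le_of_norm_le_const
      ((tilted_absolutelyContinuous μ fun ω ↦ inner ℝ x (Y ω)).ae_le hYR)
  have hS : ‖S x - S y‖ ≤ R * R * R * ‖x - y‖ := by
    simpa using (lipschitzWith_integral_tilted_inner (aestronglyMeasurable_rankOne hY hY)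
      (norm_rankOne_le hYR hYR) hY hYR).norm_sub_le x y
  have hmm : ‖m x - m y‖ ≤ R * R * ‖x - y‖ := by simpa using hlip.norm_sub_le x y
  rw [dist_eq_norm, dist_eq_norm, (hderiv x).fderiv, (hderiv y).fderiv]
  calc ‖(S x - rankOne ℝ (m x) (m x)) - (S y - rankOne ℝ (m y) (m y))‖
      = ‖(S x - S y) - (rankOne ℝ (m x - m y) (m x) + rankOne ℝ (m y) (m x - m y))‖ := by
        simp only [map_sub, sub_apply]
        congr 1
        abel
    _ ≤ ‖S x - S y‖ + (‖m x - m y‖ * ‖m x‖ + ‖m y‖ * ‖m x - m y‖) := by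
        refine (norm_sub_le _ _).trans (add_le_add_right ((norm_add_le _ _).trans_eq ?_) _)
        rw [norm_rankOne, norm_rankOne]
    _ ≤ R * R * R * ‖x - y‖ + (R * R * ‖x - y‖ * R + R * (R * R * ‖x - y‖)) := by
        gcongr <;> exact hm _
    _ = (3 * R ^ 3 : ℝ≥0) * ‖x - y‖ := by push_cast; ring

end Tilt

section Gaussian

variable {d : ℕ} {a : ℝ≥0}

/-- The density of `gaussianCov d a` with respect to Lebesgue measure. -/
def gaussianCovPdf (a : ℝ≥0) (x : Ed d) : ℝ :=
  (2 * π * a) ^ (-(d : ℝ) / 2) * Real.exp (-‖x‖ ^ 2 / (2 * a))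

lemma gaussianCov_eq_withDensity :
    gaussianCov d a = volume.withDensity fun x ↦ ENNReal.ofReal (gaussianCovPdf a x) :=
  rfl

lemma stdGaussian_eq_gaussianCov_one : stdGaussian d = gaussianCov d 1 := by
  simp [stdGaussian, gaussianCov]

lemma gaussianCovPdf_nonneg (x : Ed d) : 0 ≤ gaussianCovPdf a x := by
  unfold gaussianCovPdf
  positivity

@[fun_prop]
lemma continuous_gaussianCovPdf : Continuous (gaussianCovPdf a : Ed d → ℝ) := by
  unfold gaussianCovPdf
  fun_prop

lemma integral_gaussianCovPdf (ha : 0 < a) : ∫ x : Ed d, gaussianCovPdf a x = 1 := by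
  have hexp (x : Ed d) : -‖x‖ ^ 2 / (2 * a) = -(2 * a : ℝ)⁻¹ * ‖x‖ ^ 2 := by ring
  simp only [gaussianCovPdf, hexp]
  rw [integral_const_mul, GaussianFourier.integral_rexp_neg_mul_sq_norm (by positivity),
    finrank_euclideanSpace_fin, div_inv_eq_mul, mul_comm 2 π, mul_assoc, ← Real.rpow_add
    (by positivity), neg_div, neg_add_cancel, Real.rpow_zero]

lemma integrable_gaussianCovPdf (ha : 0 < a) : Integrable (gaussianCovPdf a : Ed d → ℝ) :=
  .of_integral_ne_zero (by simp [integral_gaussianCovPdf ha])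

lemma isProbabilityMeasure_gaussianCov (ha : 0 < a) : IsProbabilityMeasure (gaussianCov d a) := by
  constructor
  rw [gaussianCov_eq_withDensity, withDensity_apply _ .univ, Measure.restrict_univ,
    ← ofReal_integral_eq_lintegral_ofReal (integrable_gaussianCovPdf ha)
      (.of_forall gaussianCovPdf_nonneg), integral_gaussianCovPdf ha, ENNReal.ofReal_one]

lemma integral_gaussianCov {G : Type*} [NormedAddCommGroup G] [NormedSpace ℝ G] (f : Ed d → G) :
    ∫ x, f x ∂gaussianCov d a = ∫ x, gaussianCovPdf a x • f x := by
  rw [gaussianCov_eq_withDensity, integral_withDensity_eq_integral_toReal_smul (by fun_prop)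
    (by simp)]
  simp only [ENNReal.toReal_ofReal (gaussianCovPdf_nonneg _)]

lemma gaussianCovPdf_one_eq_mul (ha : 0 < a) (x : Ed d) :
    gaussianCovPdf 1 x = √a ^ d * gaussianCovPdf a (√a • x) := by
  have hdim : (a : ℝ) ^ (-(d : ℝ) / 2) = (√a ^ d)⁻¹ := by
    rw [neg_div, Real.rpow_neg a.coe_nonneg, Real.sqrt_eq_rpow,
      ← Real.rpow_mul_natCast a.coe_nonneg]
    ring_nf
  have hexp : -‖√(a : ℝ) • x‖ ^ 2 / (2 * a) = -‖x‖ ^ 2 / 2 := by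
    rw [norm_smul, mul_pow, Real.norm_eq_abs, sq_abs, Real.sq_sqrt a.coe_nonneg]
    field_simp
  rw [gaussianCovPdf, gaussianCovPdf, Real.mul_rpow (by positivity) a.coe_nonneg, hdim, hexp,
    NNReal.coe_one, mul_one, mul_one]
  field_simp

lemma map_sqrt_smul_stdGaussian (ha : 0 < a) :
    (stdGaussian d).map (√a • ·) = gaussianCov d a := by
  have hf : Measurable fun x : Ed d ↦ √a • x := measurable_const_smul _
  have hsqrt : 0 < √(a : ℝ) ^ d := by positivity
  ext s hs
  rw [stdGaussian_eq_gaussianCov_one, Measure.map_apply hf hs, ← NNReal.coe_one,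
    gaussianCov_eq_withDensity, gaussianCov_eq_withDensity, withDensity_apply _ (hf hs),
    withDensity_apply _ hs]
  simp only [gaussianCovPdf_one_eq_mul ha, ENNReal.ofReal_mul hsqrt.le]
  rw [lintegral_const_mul _ (by fun_prop),
    ← setLIntegral_map hs (f := fun x ↦ ENNReal.ofReal (gaussianCovPdf a x)) (by fun_prop) hf,
    Measure.map_addHaar_smul _ (by positivity), finrank_euclideanSpace_fin,
    Measure.restrict_smul, lintegral_smul_measure, smul_eq_mul, ← mul_assoc,
    ← ENNReal.ofReal_mul hsqrt.le, abs_of_pos (by positivity), mul_inv_cancel₀ hsqrt.ne',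
    ENNReal.ofReal_one, one_mul]

end Gaussian

section Posterior

variable {E : Type*} [NormedAddCommGroup E] [InnerProductSpace ℝ E] {a R : ℝ≥0}

/-- The logarithm at `x` of the density of the Gaussian measure with mean `t • y` and covariance
`a • 1` with respect to the centred one. -/
def logLikelihood (a t : ℝ≥0) (x y : E) : ℝ :=
  t / a * inner ℝ x y - t ^ 2 * ‖y‖ ^ 2 / (2 * a)

lemma logLikelihood_eq (ha : 0 < a) (t : ℝ≥0) (x y : E) :
    logLikelihood a t x y = (‖x‖ ^ 2 - ‖x - t • y‖ ^ 2) / (2 * a) := by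
  rw [logLikelihood, NNReal.smul_def, norm_sub_sq_real, norm_smul, real_inner_smul_right,
    NNReal.norm_eq]
  field_simp
  ring

lemma gaussianCovPdf_sub_smul {d : ℕ} (ha : 0 < a) (t : ℝ≥0) (x y : Ed d) :
    gaussianCovPdf a (x - t • y) = gaussianCovPdf a x * Real.exp (logLikelihood a t x y) := by
  rw [gaussianCovPdf, gaussianCovPdf, mul_assoc _ (Real.exp _) (Real.exp _), ← Real.exp_add,
    logLikelihood_eq ha]
  ring_nf

variable [MeasurableSpace E] {ν : Measure E}

/-- The conditional law of `Y` given `X + t • Y = x`, where `Y` has law `ν` and `X` is an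
independent centred Gaussian vector with covariance `a • 1`. It is given by Bayes' formula. -/
def posterior (ν : Measure E) (a t : ℝ≥0) (x : E) : Measure E :=
  ν.tilted (logLikelihood a t x)

/-- The conditional expectation of `Y` given `X + t • Y = x`, in the notation of `posterior`. -/
def posteriorMean (ν : Measure E) (a t : ℝ≥0) (x : E) : E :=
  ∫ y, y ∂posterior ν a t x

lemma ae_posterior_of_ae {p : E → Prop} (hp : ∀ᵐ y ∂ν, p y) (a t : ℝ≥0) (x : E) :
    ∀ᵐ y ∂posterior ν a t x, p y :=
  (tilted_absolutelyContinuous _ _).ae_le hp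

variable [BorelSpace E] [IsProbabilityMeasure ν]

lemma integrable_exp_logLikelihood [SecondCountableTopology E] (ha : 0 < a) (t : ℝ≥0) (x : E) :
    Integrable (fun y ↦ Real.exp (logLikelihood a t x y)) ν := by
  refine .of_bound (by unfold logLikelihood; fun_prop) (Real.exp (‖x‖ ^ 2 / (2 * a)))
    (.of_forall fun y ↦ ?_)
  rw [Real.norm_eq_abs, Real.abs_exp, logLikelihood_eq ha]
  gcongr
  exact sub_le_self _ (sq_nonneg _)

variable [SecondCountableTopology E]

lemma isProbabilityMeasure_posterior (ha : 0 < a) (t : ℝ≥0) (x : E) :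
    IsProbabilityMeasure (posterior ν a t x) :=
  isProbabilityMeasure_tilted (integrable_exp_logLikelihood ha t x)

lemma integral_exp_logLikelihood_smul {G : Type*} [NormedAddCommGroup G] [NormedSpace ℝ G]
    (ha : 0 < a) (t : ℝ≥0) (x : E) (F : E → G) :
    ∫ y, Real.exp (logLikelihood a t x y) • F y ∂ν =
      (∫ y, Real.exp (logLikelihood a t x y) ∂ν) • ∫ y, F y ∂posterior ν a t x := by
  have hZ := integral_exp_pos (integrable_exp_logLikelihood (ν := ν) ha t x)
  rw [posterior, integral_tilted, ← integral_smul]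
  simp only [smul_smul, mul_div_cancel₀ _ hZ.ne']

lemma posterior_eq_tilted_inner (ha : 0 < a) (t : ℝ≥0) (x : E) :
    posterior ν a t x = (posterior ν a t 0).tilted fun y ↦ inner ℝ ((t / a) • x) y := by
  rw [posterior, posterior, tilted_tilted (integrable_exp_logLikelihood ha t 0)]
  congr with y
  simp [logLikelihood, NNReal.smul_def, real_inner_smul_left]
  ring

lemma norm_posteriorMean_le (ha : 0 < a) (hν : ∀ᵐ y ∂ν, ‖y‖ ≤ R) (t : ℝ≥0) (x : E) :
    ‖posteriorMean ν a t x‖ ≤ R := by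
  have := isProbabilityMeasure_posterior (ν := ν) ha t x
  rw [posteriorMean]
  simpa using norm_integral_le_of_norm_le_const (ae_posterior_of_ae hν a t x)

lemma norm_apply_sub_posteriorMean_le {G : Type*} [NormedAddCommGroup G] [NormedSpace ℝ G]
    (ha : 0 < a) (hν : ∀ᵐ y ∂ν, ‖y‖ ≤ R) (t : ℝ≥0) {D : E →L[ℝ] G} {K : ℝ} (hK : ‖D‖ ≤ K) {y : E}
    (hy : ‖y‖ ≤ R) (x : E) : ‖D (y - posteriorMean ν a t x)‖ ≤ K * (R + R) :=
  D.le_of_opNorm_le_of_le hK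
    ((norm_sub_le _ _).trans (add_le_add hy (norm_posteriorMean_le ha hν t x)))

lemma isC11With_posteriorMean [CompleteSpace E] (ha : 0 < a) (hν : ∀ᵐ y ∂ν, ‖y‖ ≤ R) (t : ℝ≥0) :
    IsC11With (R ^ 2 / a * t) (3 * R ^ 3 * (t / a) ^ 2) (posteriorMean ν a t) := by
  have := isProbabilityMeasure_posterior (ν := ν) ha t 0
  have hlin : IsC11With (t / a) 0 fun x : E ↦ (t / a) • x :=
    (IsC11With.of_continuousLinearMap ((t / a : ℝ≥0) • ContinuousLinearMap.id ℝ E)).mono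
      (ContinuousLinearMap.opNNNorm_le_bound _ _ fun x ↦ by
        simp [NNReal.smul_def, nnnorm_smul]) le_rfl
  have hmean := (isC11With_integral_tilted_inner (Y := fun y ↦ y)
    aestronglyMeasurable_id (ae_posterior_of_ae hν a t 0)).comp hlin
  have heq : posteriorMean ν a t = (fun x ↦ ∫ y, y ∂((posterior ν a t 0).tilted
      fun y ↦ inner ℝ x y)) ∘ fun x ↦ (t / a) • x := by
    ext1 x
    rw [posteriorMean, posterior_eq_tilted_inner ha, Function.comp_apply]
  rw [heq]
  refine hmean.mono (le_of_eq (by ring)) (le_of_eq (by ring))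

end Posterior

section Mixture

variable {d : ℕ} {ν : Measure (Ed d)} {a R : ℝ≥0}

/-- The law of `X + t • Y`, where `X` is a centred Gaussian vector with covariance `a • 1` and `Y`
is independent of `X` with law `ν`. -/
def gaussianMixture (ν : Measure (Ed d)) (a t : ℝ≥0) : Measure (Ed d) :=
  ((gaussianCov d a).prod ν).map fun z ↦ z.1 + t • z.2

lemma gaussianMixture_zero [IsProbabilityMeasure ν] (a : ℝ≥0) :
    gaussianMixture ν a 0 = gaussianCov d a := by
  simp [gaussianMixture]

lemma gaussianMixture_one (ν : Measure (Ed d)) (a : ℝ≥0) :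
    gaussianMixture ν a 1 = mconv (gaussianCov d a) ν := by
  simp [gaussianMixture, mconv]

variable {G : Type*} [NormedAddCommGroup G] [NormedSpace ℝ G]

lemma integral_gaussianMixture {u : Ed d → G} (hu : Continuous u) (a t : ℝ≥0) :
    ∫ x, u x ∂gaussianMixture ν a t = ∫ z, u (z.1 + t • z.2) ∂(gaussianCov d a).prod ν :=
  integral_map (by fun_prop) hu.aestronglyMeasurable

variable [IsProbabilityMeasure ν]

lemma integrable_gaussianCovPdf_sub_smul (ha : 0 < a) (t : ℝ≥0) :
    Integrable (fun z : Ed d × Ed d ↦ gaussianCovPdf a (z.2 - t • z.1)) (ν.prod volume) := by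
  refine (integrable_prod_iff (by fun_prop)).2
    ⟨.of_forall fun y ↦ (integrable_gaussianCovPdf ha).comp_sub_right (t • y), ?_⟩
  simp only [Real.norm_of_nonneg (gaussianCovPdf_nonneg _),
    integral_sub_right_eq_self (gaussianCovPdf a), integral_gaussianCovPdf ha]
  exact integrable_const 1

lemma integral_gaussianCov_prod_comp_add_smul (ha : 0 < a) (t : ℝ≥0) {Φ : Ed d → Ed d → G} {C : ℝ}
    (hΦ : Continuous (Function.uncurry Φ)) (hC : ∀ᵐ y ∂ν, ∀ x, ‖Φ x y‖ ≤ C) :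
    ∫ z, Φ (z.1 + t • z.2) z.2 ∂(gaussianCov d a).prod ν =
      ∫ x, ∫ y, gaussianCovPdf a (x - t • y) • Φ x y ∂ν := by
  have := isProbabilityMeasure_gaussianCov (d := d) ha
  have iΦ : Integrable (fun z ↦ Φ (z.1 + t • z.2) z.2) ((gaussianCov d a).prod ν) := by
    refine .of_bound (hΦ.comp (by fun_prop : Continuous fun z : Ed d × Ed d ↦
      (z.1 + t • z.2, z.2))).aestronglyMeasurable C ?_
    filter_upwards [Measure.quasiMeasurePreserving_snd.ae hC] with z hz using hz _
  have ipΦ : Integrable (fun z : Ed d × Ed d ↦ gaussianCovPdf a (z.2 - t • z.1) • Φ z.2 z.1)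
      (ν.prod volume) := by
    refine (integrable_gaussianCovPdf_sub_smul ha t).smul_bdd C
      (hΦ.comp continuous_swap).aestronglyMeasurable ?_
    filter_upwards [Measure.quasiMeasurePreserving_fst.ae hC] with z hz using hz _
  calc ∫ z, Φ (z.1 + t • z.2) z.2 ∂(gaussianCov d a).prod ν
      = ∫ y, (∫ x, gaussianCovPdf a x • Φ (x + t • y) y) ∂ν := by
        rw [integral_prod_symm _ iΦ]
        simp only [integral_gaussianCov]
    _ = ∫ y, (∫ x, gaussianCovPdf a (x - t • y) • Φ x y) ∂ν := by
        congr with y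
        rw [← integral_sub_right_eq_self _ (t • y)]
        simp only [sub_add_cancel]
    _ = ∫ x, ∫ y, gaussianCovPdf a (x - t • y) • Φ x y ∂ν := integral_integral_swap ipΦ

-- The residual `Y - E[Y | X_t]` is orthogonal to every function of `X_t = X + t • Y`.
lemma integral_apply_sub_posteriorMean_eq_zero [CompleteSpace G] (ha : 0 < a)
    (hν : ∀ᵐ y ∂ν, ‖y‖ ≤ R) (t : ℝ≥0) {D : Ed d → Ed d →L[ℝ] G} {K : ℝ≥0} (hD : Continuous D)
    (hK : ∀ x, ‖D x‖ ≤ K) :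
    ∫ z, D (z.1 + t • z.2) (z.2 - posteriorMean ν a t (z.1 + t • z.2))
      ∂(gaussianCov d a).prod ν = 0 := by
  have hv : Continuous (posteriorMean ν a t) :=
    (isC11With_posteriorMean ha hν t).lipschitzWith.continuous
  have hbound : ∀ᵐ y ∂ν, ∀ x, ‖D x (y - posteriorMean ν a t x)‖ ≤ K * (R + R) := by
    filter_upwards [hν] with y hy x
    exact norm_apply_sub_posteriorMean_le ha hν t (hK x) hy x
  have hcentred (x : Ed d) :
      ∫ y, D x (y - posteriorMean ν a t x) ∂posterior ν a t x = 0 := by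
    have := isProbabilityMeasure_posterior (ν := ν) ha t x
    have iY : Integrable (fun y ↦ y) (posterior ν a t x) :=
      .of_bound aestronglyMeasurable_id R (ae_posterior_of_ae hν a t x)
    have iY0 : Integrable (fun y ↦ y - posteriorMean ν a t x) (posterior ν a t x) :=
      iY.sub (integrable_const _)
    rw [(D x).integral_comp_comm iY0, integral_sub iY (integrable_const _), integral_const,
      probReal_univ, one_smul, posteriorMean, sub_self, map_zero]
  rw [integral_gaussianCov_prod_comp_add_smul ha t
    (Φ := fun x y ↦ D x (y - posteriorMean ν a t x)) (by fun_prop) hbound]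
  simp only [gaussianCovPdf_sub_smul ha, mul_smul, integral_smul,
    integral_exp_logLikelihood_smul ha, hcentred, smul_zero, integral_zero]

lemma isWeaklyConsistent_posteriorMean (ha : 0 < a) (hν : ∀ᵐ y ∂ν, ‖y‖ ≤ R) :
    IsWeaklyConsistent (posteriorMean ν a) (gaussianMixture ν a) (2 * R ^ 2) := by
  intro t h K M u hu hu1
  have := isProbabilityMeasure_gaussianCov (d := d) ha
  set P := (gaussianCov d a).prod ν
  set v := posteriorMean ν a t
  set X : Ed d × Ed d → Ed d := fun z ↦ z.1 + t • z.2
  have hYR : ∀ᵐ z ∂P, ‖z.2‖ ≤ R := Measure.quasiMeasurePreserving_snd.ae hν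
  have hvR (x : Ed d) : ‖v x‖ ≤ R := norm_posteriorMean_le ha hν t x
  have hX : Continuous X := by fun_prop
  have hu_cont : Continuous u := hu.lipschitzWith.continuous
  have hDu_cont : Continuous (fderiv ℝ u) := hu.lipschitzWith_fderiv.continuous
  have hv_cont : Continuous v := (isC11With_posteriorMean ha hν t).lipschitzWith.continuous
  have iu {f : Ed d × Ed d → Ed d} (hf : Continuous f) : Integrable (fun z ↦ u (f z)) P :=
    .of_bound (hu_cont.comp hf).aestronglyMeasurable 1 (.of_forall fun z ↦ hu1 (f z))
  have iuY : Integrable (fun z ↦ u (X z + h • z.2)) P := iu (by fun_prop)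
  have iuv : Integrable (fun z ↦ u (X z + h • v (X z))) P := iu (by fun_prop)
  have iu_sub : Integrable (fun z ↦ u (X z + h • z.2) - u (X z + h • v (X z))) P := iuY.sub iuv
  have iDu : Integrable (fun z ↦ (h : ℝ) • fderiv ℝ u (X z) (z.2 - v (X z))) P := by
    refine Integrable.smul (h : ℝ) (.of_bound (Continuous.aestronglyMeasurable ?_) (K * (R + R)) ?_)
    · fun_prop
    · filter_upwards [hYR] with z hz using norm_apply_sub_posteriorMean_le ha hν t
        (hu.norm_fderiv_le _) hz _
  have hremainder : ∫ x, u x ∂gaussianMixture ν a (t + h) -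
      ∫ x, u (x + h • v x) ∂gaussianMixture ν a t =
      ∫ z, (u (X z + h • z.2) - u (X z + h • v (X z)) -
        (h : ℝ) • fderiv ℝ u (X z) (z.2 - v (X z))) ∂P := by
    rw [integral_sub iu_sub iDu, integral_sub iuY iuv, integral_smul,
      integral_apply_sub_posteriorMean_eq_zero ha hν t hDu_cont hu.norm_fderiv_le, smul_zero,
      sub_zero, integral_gaussianMixture hu_cont, integral_gaussianMixture (by fun_prop)]
    simp only [X, P, add_smul, add_assoc]
  rw [hremainder]
  refine (norm_integral_le_of_norm_le_const (C := 2 * R ^ 2 * M * h ^ 2) ?_).trans_eq (by simp)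
  filter_upwards [hYR] with z hz using hu.norm_sub_sub_smul_fderiv_le hz (hvR _) _ h

end Mixture

section Compactness

open Filter Topology

lemma exists_lipschitzWith_subseq_tendsto {X Y : Type*} [PseudoMetricSpace X] [MetricSpace Y]
    [WeaklyLocallyCompactSpace X] [SigmaCompactSpace X] {f : ℕ → X → Y} {K : ℝ≥0} {Q : X → Set Y}
    (hf : ∀ n, LipschitzWith K (f n)) (hQ : ∀ x, IsCompact (Q x)) (hfQ : ∀ n x, f n x ∈ Q x) :
    ∃ φ : X → Y, LipschitzWith K φ ∧
      ∃ σ : ℕ → ℕ, StrictMono σ ∧ ∀ x, Tendsto (fun n ↦ f (σ n) x) atTop (𝓝 (φ x)) := by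
  set S : Set C(X, Y) := {g | LipschitzWith K g ∧ ∀ x, g x ∈ Q x}
  have hS : ContinuousMap.toFun '' S = {g | LipschitzWith K g} ∩ Set.pi univ Q := by
    ext g
    constructor
    · rintro ⟨g, ⟨hg, hgQ⟩, rfl⟩
      exact ⟨hg, fun x _ ↦ hgQ x⟩
    · rintro ⟨hg, hgQ⟩
      exact ⟨⟨g, hg.continuous⟩, ⟨hg, fun x ↦ hgQ x trivial⟩, rfl⟩
  have hcompact : IsCompact S :=
    ArzelaAscoli.isCompact_of_equicontinuous S
      (hS ▸ (isCompact_univ_pi hQ).inter_left (isClosed_setOfPred_lipschitzWith K))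
      (LipschitzWith.uniformEquicontinuous _ K fun g ↦ g.2.1).equicontinuous
  obtain ⟨φ, hφ, σ, hσ, hlim⟩ := hcompact.tendsto_subseq
    (x := fun n ↦ ⟨f n, (hf n).continuous⟩) fun n ↦ ⟨hf n, hfQ n⟩
  exact ⟨φ, hφ.1, σ, hσ, fun x ↦ ((continuous_eval_const x).tendsto φ).comp hlim⟩

lemma map_eq_of_tendsto_integral_cexp_inner {X E : Type*} [MeasurableSpace X]
    [NormedAddCommGroup E] [InnerProductSpace ℝ E] [CompleteSpace E] [SecondCountableTopology E]
    [MeasurableSpace E] [BorelSpace E] {γ : Measure X} [IsFiniteMeasure γ] {μ : Measure E}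
    [IsFiniteMeasure μ] {f : ℕ → X → E} {φ : X → E} (hf : ∀ n, AEMeasurable (f n) γ)
    (hφ : ∀ᵐ x ∂γ, Tendsto (fun n ↦ f n x) atTop (𝓝 (φ x)))
    (hμ : ∀ ξ, Tendsto (fun n ↦ ∫ x, Complex.exp (inner ℝ (f n x) ξ * Complex.I) ∂γ) atTop
      (𝓝 (∫ y, Complex.exp (inner ℝ y ξ * Complex.I) ∂μ))) :
    γ.map φ = μ := by
  refine Measure.ext_of_charFun (funext fun ξ ↦ tendsto_nhds_unique ?_ (hμ ξ))
  have hchar : Continuous fun y : E ↦ Complex.exp (inner ℝ y ξ * Complex.I) := by fun_prop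
  rw [charFun_apply, integral_map (aemeasurable_of_tendsto_metrizable_ae _ hf hφ)
    hchar.aestronglyMeasurable]
  refine tendsto_integral_of_dominated_convergence 1
    (fun n ↦ (hchar.measurable.comp_aemeasurable (hf n)).aestronglyMeasurable)
    (integrable_const 1) (fun n ↦ ?_) ?_
  · simp [Complex.norm_exp_ofReal_mul_I]
  · filter_upwards [hφ] with x hx using (hchar.tendsto _).comp hx

end Compactness

section Transport

variable {d : ℕ} {ν : Measure (Ed d)} {a R : ℝ≥0}

lemma msupport_eq_support (ν : Measure (Ed d)) : msupport ν = ν.support := by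
  rw [Measure.support_eq_forall_isOpen]
  ext x
  exact forall_congr' fun U ↦ ⟨fun h hx hU ↦ pos_iff_ne_zero.2 (h hU hx),
    fun h hU hx ↦ (h hx hU).ne'⟩

lemma ae_norm_le_of_msupport_subset {R : ℝ} (hν : msupport ν ⊆ Metric.closedBall 0 R) :
    ∀ᵐ y ∂ν, ‖y‖ ≤ R := by
  filter_upwards [Measure.support_mem_ae] with y hy
  simpa using hν (msupport_eq_support ν ▸ hy)

lemma exists_lipschitzWith_map_gaussianCov_eq_mconv [IsProbabilityMeasure ν] (ha : 0 < a)
    (hν : ∀ᵐ y ∂ν, ‖y‖ ≤ R) :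
    ∃ φ : Ed d → Ed d, LipschitzWith (Real.exp (R ^ 2 / (2 * a))).toNNReal φ ∧
      (gaussianCov d a).map φ = mconv (gaussianCov d a) ν := by
  have := isProbabilityMeasure_gaussianCov (d := d) ha
  have : IsFiniteMeasure (mconv (gaussianCov d a) ν) := Measure.isFiniteMeasure_map _ _
  set v := posteriorMean ν a
  set f : ℕ → Ed d → Ed d := fun n ↦ eulerMap v (n : ℝ≥0)⁻¹ n
  have hn (n : ℕ) : (n * (n : ℝ≥0)⁻¹ : ℝ) ≤ 1 := mul_inv_le_one
  have hv (t : ℝ≥0) := isC11With_posteriorMean ha hν t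
  have hf (n : ℕ) : LipschitzWith (Real.exp (R ^ 2 / (2 * a))).toNNReal (f n) := by
    refine (lipschitzWith_eulerMap (fun t ↦ (hv t).lipschitzWith) (n : ℝ≥0)⁻¹ n).weaken ?_
    have hexp : R ^ 2 / a * (n * (n : ℝ)⁻¹) ^ 2 / 2 ≤ R ^ 2 / a * 1 ^ 2 / 2 := by
      gcongr
      exact hn n
    refine Real.toNNReal_le_toNNReal (Real.exp_le_exp.2 ?_)
    push_cast
    exact hexp.trans_eq (by ring)
  have hfR (n : ℕ) (x : Ed d) : f n x ∈ Metric.closedBall 0 (‖x‖ + R) := by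
    rw [mem_closedBall_zero_iff]
    refine (norm_eulerMap_le (norm_posteriorMean_le ha hν) _ n x).trans ?_
    gcongr
    exact mul_le_of_le_one_left R.2 (hn n)
  obtain ⟨φ, hφ, σ, hσ, hlim⟩ := exists_lipschitzWith_subseq_tendsto hf
    (fun x ↦ isCompact_closedBall 0 (‖x‖ + R)) hfR
  refine ⟨φ, hφ, map_eq_of_tendsto_integral_cexp_inner
    (fun n ↦ (hf (σ n)).continuous.aemeasurable) (.of_forall hlim) fun ξ ↦ ?_⟩
  have hchar := (isWeaklyConsistent_posteriorMean ha hν).tendsto_integral_eulerMap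
    (A := R ^ 2 / a) (B := 3 * R ^ 3 * (1 / a) ^ 2) (L := ‖ξ‖₊ + ‖ξ‖₊ ^ 2)
    (fun t ht ↦ (hv t).mono (mul_le_of_le_one_right' ht) (by gcongr))
    ((isC11With_cexp_inner_mul_I ξ).mono le_self_add le_add_self)
    (fun x ↦ (Complex.norm_exp_ofReal_mul_I _).le)
  rw [gaussianMixture_zero, gaussianMixture_one] at hchar
  exact hchar.comp hσ.tendsto_atTop

end Transport

/-- For `a > 0` and `ν` supported in a ball of radius `R`, there is a
`√a·e^{R²/(2a)}`-Lipschitz map pushing the standard Gaussian forward to `γ_d^a ⋆ ν`. -/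
theorem transport_scaled_gaussian_mixture
    (d : ℕ) (a R : ℝ) (ha : 0 < a) (ν : Measure (Ed d)) [IsProbabilityMeasure ν]
    (hν : msupport ν ⊆ Metric.closedBall 0 R) :
    ∃ φ : Ed d → Ed d,
      LipschitzWith (Real.toNNReal (Real.sqrt a * Real.exp (R ^ 2 / (2 * a)))) φ ∧
      Measure.map φ (stdGaussian d) = mconv (gaussianCov d a) ν := by
  have hνR : ∀ᵐ y ∂ν, ‖y‖ ≤ R := ae_norm_le_of_msupport_subset hν
  obtain ⟨y, hy⟩ := hνR.exists
  lift R to ℝ≥0 using (norm_nonneg y).trans hy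
  lift a to ℝ≥0 using ha.le
  obtain ⟨φ, hφ, hmap⟩ := exists_lipschitzWith_map_gaussianCov_eq_mconv (mod_cast ha) hνR
  refine ⟨fun x ↦ φ (√a • x), ?_, ?_⟩
  · have hsmul : LipschitzWith (√a : ℝ).toNNReal fun x : Ed d ↦ √(a : ℝ) • x := by
      rw [Real.toNNReal_eq_nnnorm_of_nonneg (Real.sqrt_nonneg _)]
      exact lipschitzWith_smul _
    rw [mul_comm, Real.toNNReal_mul (exp_nonneg _)]
    exact hφ.comp hsmul
  · rw [← hmap, ← map_sqrt_smul_stdGaussian (mod_cast ha),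
      Measure.map_map hφ.continuous.measurable (measurable_const_smul _)]
    rfl
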